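/- arXiv:math/0011181 — 2 statements merged into one kernel-verified Lean document; each statement's English description precedes it below -/
import Mathlib

section
/- Let R = k[x_1,...,x_n] and let p, q ⊆ R be prime ideals with p ⊄ q. Set i = height(p) and j = height(q). Then Hom_R(H^i_p(R), H^j_q(R)) = 0. -/
open MvPolynomial

/-- The height of an ideal: the infimum of the heights (in the prime spectrum) of the
minimal primes over it. -/
noncomputable def idealHeight {R : Type*} [CommRing R] (I : Ideal R) : ℕ∞ :=
  ⨅ p : {p : Ideal R // p ∈ I.minimalPrimes},
    Order.height (⟨p.1, p.2.1.1⟩ : PrimeSpectrum R)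

/-!
Pick `s ∈ p` with `s ∉ q`. Every element of `H^i_p(R)` is killed by a power of `s`, so it is
enough that `s` is a nonzerodivisor on `H^j_q(R)` for `j = ht q`; equivalently, all associated
primes of `H^j_q(R)` are `q`. As `H^j_q(R)` is the filtered colimit of the `Ext^j(R / q ^ t, R)`,
it is enough to show this for these. The kernel and cokernel of `s` on a finite module `N` killed
by `q ^ t` are supported on `V(q + (s))`. The ideal `q + (s)` has height at least `j + 1`, so in a
Cohen–Macaulay ring it contains a regular sequence of that length, and `Ext^m(-, R)` of the kernel
and of the cokernel vanishes for `m ≤ j`. Hence `s` is injective on `Ext^j(N, R)`.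

That `R` is Cohen–Macaulay follows by adjoining one variable at a time: a prime `P` of `A[X]` either
is extended from `A` or has height one more than its contraction, and then contains an element
regular modulo a maximal regular sequence of the contraction.
-/

universe u v

section Unmixedness

open CategoryTheory Abelian RingTheory.Sequence Pointwise

/-- Cohen–Macaulay rings: Noetherian rings in which the grade of every prime ideal `p` is at
least its height, so that `p` contains a weakly regular sequence of that length. This is
equivalent to all localizations at primes being Cohen–Macaulay local rings. -/
class IsCohenMacaulayRing (A : Type u) [CommRing A] : Prop extends IsNoetherianRing A where
  exists_isWeaklyRegular_of_isPrime : ∀ p : Ideal A, p.IsPrime →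
    ∃ rs : List A, (rs.length : ℕ∞) = p.height ∧ (∀ r ∈ rs, r ∈ p) ∧ IsWeaklyRegular A rs

variable {A : Type u} [CommRing A]

lemma subsingleton_ext_self_of_isWeaklyRegular [IsNoetherianRing A] {I : Ideal A}
    {N : ModuleCat.{u} A} [Module.Finite A N]
    (hN : Module.support A N ⊆ PrimeSpectrum.zeroLocus I) {rs : List A}
    (hmem : ∀ r ∈ rs, r ∈ I) (hrs : IsWeaklyRegular A rs) {i : ℕ} (hi : i < rs.length) :
    Subsingleton (Ext N (ModuleCat.of A A) i) := by
  by_cases hI : I = ⊤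
  · have : Subsingleton N := by
      rw [← Module.support_eq_empty_iff (R := A), Set.eq_empty_iff_forall_notMem]
      intro P hP
      exact P.2.ne_top (top_le_iff.mp (hI ▸ hN hP))
    have hid : 𝟙 N = 0 := (ModuleCat.isZero_of_subsingleton N).eq_of_src _ _
    refine subsingleton_of_forall_eq 0 fun x ↦ ?_
    rw [← Ext.mk₀_id_comp x, hid, Ext.mk₀_zero, Ext.zero_comp]
  · refine ModuleCat.subsingleton_ext_of_exists_isRegular I N hN (ModuleCat.of A A) ?_ rs hmem
      ⟨hrs, fun h ↦ hI ?_⟩ i hi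
    · simpa [lt_top_iff_ne_top] using hI
    · have : Ideal.ofList rs = ⊤ := by simpa using h.symm
      exact top_le_iff.mp (this ▸ Ideal.span_le.mpr hmem)

lemma subsingleton_linearMap_quotient_ofList_smul_top (N : ModuleCat.{u} A) {rs : List A} :
    ∀ {M : ModuleCat.{u} A}, IsWeaklyRegular M rs →
      (∀ i ≤ rs.length, Subsingleton (Ext N M i)) →
      Subsingleton (N →ₗ[A] (M ⧸ (Ideal.ofList rs • ⊤ : Submodule A M))) := by
  induction rs with
  | nil =>
    intro M _ hExt
    have := hExt 0 le_rfl
    have : Subsingleton (N →ₗ[A] M) :=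
      (Ext.addEquiv₀.trans ModuleCat.homAddEquiv).symm.subsingleton
    let e : (M ⧸ (Ideal.ofList [] • ⊤ : Submodule A M)) ≃ₗ[A] M :=
      Submodule.quotEquivOfEqBot _
        (congrArg (· • (⊤ : Submodule A M)) Ideal.ofList_nil |>.trans (Submodule.bot_smul ⊤))
    exact (e.congrRight (M := N)).subsingleton
  | cons a rs ih =>
    intro M hM hExt
    obtain ⟨ha, hrs⟩ := (isWeaklyRegular_cons_iff _ _ _).mp hM
    have hQuot (i : ℕ) (hi : i ≤ rs.length) :
        Subsingleton (Ext N (ModuleCat.of A (QuotSMulTop a M)) i) := by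
      refine subsingleton_of_forall_eq 0 fun x ↦ ?_
      obtain ⟨y, rfl⟩ := Ext.covariant_sequence_exact₃ N ha.smulShortComplex_shortExact x rfl
        ((hExt (i + 1) (by simpa using hi)).elim _ _)
      have hy : y = 0 := (hExt i (hi.trans (by simp))).elim _ _
      rw [hy, Ext.zero_comp]
      rfl
    have := ih (M := ModuleCat.of A (QuotSMulTop a M)) hrs hQuot
    let e := Submodule.quotOfListConsSMulTopEquivQuotSMulTopInner M a rs
    exact (e.congrRight (M := N)).subsingleton

lemma height_le_length_of_mem_associatedPrimes [IsCohenMacaulayRing A] {rs : List A}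
    (hrs : IsWeaklyRegular A rs) {Q : Ideal A}
    (hQ : Q ∈ associatedPrimes A (A ⧸ Ideal.ofList rs)) : Q.height ≤ rs.length := by
  have : Q.IsPrime := hQ.isPrime
  by_contra! hlt
  obtain ⟨ss, hlen, hmem, hss⟩ :=
    IsCohenMacaulayRing.exists_isWeaklyRegular_of_isPrime Q inferInstance
  have hsupp : Module.support A (A ⧸ Q) ⊆ PrimeSpectrum.zeroLocus Q := by
    rw [Module.support_eq_zeroLocus, Ideal.annihilator_quotient]
  have hExt (i : ℕ) (hi : i ≤ rs.length) :
      Subsingleton (Ext (ModuleCat.of A (A ⧸ Q)) (ModuleCat.of A A) i) :=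
    subsingleton_ext_self_of_isWeaklyRegular hsupp hmem hss
      (hi.trans_lt (by rwa [← hlen, Nat.cast_lt] at hlt))
  have hHom := subsingleton_linearMap_quotient_ofList_smul_top _ hrs hExt
  rw [smul_eq_mul, Ideal.mul_top] at hHom
  obtain ⟨_, f, hf⟩ := (isAssociatedPrime_iff_exists_injective_linearMap _ _).mp hQ
  have hf0 : f = 0 := hHom.elim f 0
  have : f 1 = f 0 := by simp [hf0]
  exact one_ne_zero (hf this)

lemma exists_isWeaklyRegular_length_eq_of_le_height [IsCohenMacaulayRing A] (I : Ideal A) (n : ℕ)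
    (hn : n ≤ I.height) :
    ∃ rs : List A, rs.length = n ∧ (∀ r ∈ rs, r ∈ I) ∧ IsWeaklyRegular A rs := by
  induction n with
  | zero => exact ⟨[], rfl, by simp, .nil A A⟩
  | succ n ih =>
    have hlt : (n : ℕ∞) < I.height := (Nat.cast_lt.mpr n.lt_succ_self).trans_le hn
    obtain ⟨rs, rfl, hmem, hrs⟩ := ih hlt.le
    obtain ⟨s, hsI, hs⟩ : ∃ s ∈ I, ∀ Q ∈ associatedPrimes A (A ⧸ Ideal.ofList rs), s ∉ Q := by
      by_contra! hcover
      obtain ⟨Q, hQ, hIQ⟩ := (Ideal.subset_union_prime_finite (f := id)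
        (associatedPrimes.finite A (A ⧸ Ideal.ofList rs)) ⊥ ⊥ (fun Q hQ _ _ ↦ hQ.isPrime)).mp
        fun s hs ↦ Set.mem_iUnion₂.mpr (by simpa using hcover s hs)
      exact hlt.not_ge ((Ideal.height_mono hIQ).trans
        (height_le_length_of_mem_associatedPrimes hrs hQ))
    have hreg : IsSMulRegular (A ⧸ Ideal.ofList rs) s := by
      by_contra hns
      obtain ⟨Q, hQ, hsQ⟩ := Set.mem_iUnion₂.mp
        ((biUnion_associatedPrimes_eq_compl_regular A (A ⧸ Ideal.ofList rs)).ge hns)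
      exact hs Q hQ hsQ
    refine ⟨rs ++ [s], by simp, by simpa [or_imp, forall_and] using ⟨hmem, hsI⟩, ?_⟩
    rw [isWeaklyRegular_append_iff, isWeaklyRegular_singleton_iff, smul_eq_mul, Ideal.mul_top]
    exact ⟨hrs, hreg⟩

end Unmixedness

section PolynomialRing

open scoped Polynomial
open RingTheory.Sequence

lemma height_map_C {A : Type u} [CommRing A] [IsNoetherianRing A] (p : Ideal A) [p.IsPrime] :
    (p.map (Polynomial.C : A →+* A[X])).height = p.height := by
  have : (p.map (Polynomial.C : A →+* A[X])).LiesOver p :=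
    ⟨by ext x; simp [Ideal.under_def, Ideal.mem_map_C_iff, Polynomial.coeff_C, apply_ite]⟩
  have : (p.map (Polynomial.C : A →+* A[X])).IsPrime := inferInstance
  simp [Ideal.height_eq_height_add_of_liesOver_of_hasGoingDown p]

attribute [local instance] Polynomial.algebra Polynomial.isLocalization in
lemma height_le_height_comap_C_add_one {A : Type u} [CommRing A] [IsNoetherianRing A]
    (P : Ideal A[X]) [P.IsPrime] : P.height ≤ (P.comap Polynomial.C).height + 1 := by
  set p : Ideal A := P.comap Polynomial.C
  let Aₚ := Localization.AtPrime p
  let S : Submonoid A[X] := p.primeCompl.map Polynomial.C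
  have hdisj : Disjoint (S : Set A[X]) P := by
    rw [Set.disjoint_left]
    rintro _ ⟨b, hb, rfl⟩ hbP
    exact hb hbP
  have hprime : (P.map (algebraMap A[X] Aₚ[X])).IsPrime :=
    IsLocalization.isPrime_of_isPrime_disjoint S _ _ ‹_› hdisj
  rw [← WithBot.coe_le_coe]
  calc (P.height : WithBot ℕ∞) = (P.map (algebraMap A[X] Aₚ[X])).height := by
        rw [IsLocalization.height_map_of_disjoint S P hdisj]
    _ ≤ ringKrullDim Aₚ[X] := Ideal.height_le_ringKrullDim_of_ne_top hprime.ne_top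
    _ = p.height + 1 := by
        rw [Polynomial.ringKrullDim_of_isNoetherianRing,
          IsLocalization.AtPrime.ringKrullDim_eq_height p Aₚ]

-- McCoy: a zero divisor of `(A ⧸ J)[X]` is killed by a nonzero constant.
lemma isSMulRegular_quotient_map_C {A : Type u} [CommRing A] [IsNoetherianRing A] {J : Ideal A}
    {f : A[X]} (hf : ∀ Q ∈ associatedPrimes A (A ⧸ J), f ∉ Q.map Polynomial.C) :
    IsSMulRegular (A[X] ⧸ J.map Polynomial.C) f := by
  let φ := Polynomial.mapRingHom (Ideal.Quotient.mk J)
  have hφ (g : A[X]) : φ g = 0 ↔ g ∈ J.map Polynomial.C := by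
    rw [← RingHom.mem_ker, Polynomial.ker_mapRingHom, Ideal.mk_ker]
  have hreg : φ f ∈ nonZeroDivisors (A ⧸ J)[X] := by
    by_contra hzd
    obtain ⟨b, hb, hbf⟩ := Polynomial.notMem_nonZeroDivisors_iff.mp hzd
    obtain ⟨Q, hQ, hle⟩ := exists_le_isAssociatedPrime_of_isNoetherianRing A b hb
    refine hf Q hQ (Ideal.mem_map_C_iff.mpr fun n ↦ hle ?_)
    have : b * Ideal.Quotient.mk J (f.coeff n) = 0 := by
      simpa [φ] using congrArg (Polynomial.coeff · n) hbf
    simpa [Algebra.smul_def, mul_comm] using this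
  rw [isSMulRegular_iff_right_eq_zero_of_smul]
  intro g hg
  obtain ⟨g, rfl⟩ := Ideal.Quotient.mk_surjective g
  have hfg : φ f * φ g = 0 := by
    rw [← map_mul, hφ]
    exact Ideal.Quotient.eq_zero_iff_mem.mp hg
  exact Ideal.Quotient.eq_zero_iff_mem.mpr
    ((hφ g).mp ((mem_nonZeroDivisors_iff.mp hreg).1 _ hfg))

lemma le_map_C_comap_C_of_le_map_C {A : Type u} [CommRing A] [IsNoetherianRing A] {P : Ideal A[X]}
    [P.IsPrime] {Q : Ideal A} (hPQ : P ≤ Q.map Polynomial.C)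
    (hQ : Q.height ≤ (P.comap Polynomial.C).height) :
    P ≤ (P.comap Polynomial.C).map Polynomial.C := by
  have hle : P.comap Polynomial.C ≤ Q := fun a ha ↦ by
    simpa using Ideal.mem_map_C_iff.mp (hPQ ha) 0
  rwa [Ideal.eq_of_le_of_height_le (P.comap Polynomial.C) hle hQ]

instance IsCohenMacaulayRing.polynomial (A : Type u) [CommRing A] [IsCohenMacaulayRing A] :
    IsCohenMacaulayRing A[X] where
  exists_isWeaklyRegular_of_isPrime P hP := by
    obtain ⟨rs, hlen, hmem, hrs⟩ :=
      exists_isWeaklyRegular_of_isPrime (P.comap Polynomial.C) inferInstance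
    have hrsC : IsWeaklyRegular A[X] (rs.map (Polynomial.C : A →+* A[X])) := hrs.of_flat
    have hmemC : ∀ r ∈ rs.map (Polynomial.C : A →+* A[X]), r ∈ P := by simpa using hmem
    have hle : (P.comap Polynomial.C).map Polynomial.C ≤ P := Ideal.map_comap_le
    by_cases hPC : P ≤ (P.comap Polynomial.C).map Polynomial.C
    · refine ⟨rs.map Polynomial.C, ?_, hmemC, hrsC⟩
      rw [le_antisymm hPC hle, height_map_C, List.length_map, hlen]
    · obtain ⟨f, hfP, hf⟩ : ∃ f ∈ P, ∀ Q ∈ associatedPrimes A (A ⧸ Ideal.ofList rs),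
          f ∉ Q.map Polynomial.C := by
        by_contra! hcover
        obtain ⟨Q, hQ, hPQ⟩ := (Ideal.subset_union_prime_finite
          (associatedPrimes.finite A (A ⧸ Ideal.ofList rs)) ⊥ ⊥ (fun Q hQ _ _ ↦
            have := hQ.isPrime; inferInstance)).mp
          fun f hf ↦ Set.mem_iUnion₂.mpr (by simpa using hcover f hf)
        exact hPC (le_map_C_comap_C_of_le_map_C hPQ
          (hlen ▸ height_le_length_of_mem_associatedPrimes hrs hQ))
      refine ⟨rs.map Polynomial.C ++ [f], le_antisymm ?_ ?_,
        by simpa [or_imp, forall_and] using ⟨hmem, hfP⟩, ?_⟩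
      · have := Ideal.height_strict_mono_of_isPrime (lt_of_le_not_ge hle hPC)
        rw [height_map_C, ← hlen] at this
        simpa using Order.add_one_le_of_lt this
      · simpa [hlen] using height_le_height_comap_C_add_one P
      · rw [isWeaklyRegular_append_iff, isWeaklyRegular_singleton_iff, ← Ideal.map_ofList,
          smul_eq_mul, Ideal.mul_top]
        exact ⟨hrsC, isSMulRegular_quotient_map_C hf⟩

instance IsCohenMacaulayRing.of_field (k : Type u) [Field k] : IsCohenMacaulayRing k where
  exists_isWeaklyRegular_of_isPrime p hp :=
    ⟨[], by simp [(Ideal.eq_bot_or_top p).resolve_right hp.ne_top], by simp, .nil k k⟩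

lemma IsCohenMacaulayRing.of_ringEquiv {A : Type u} {B : Type v} [CommRing A] [CommRing B]
    (e : A ≃+* B) [IsCohenMacaulayRing A] : IsCohenMacaulayRing B where
  toIsNoetherian := isNoetherianRing_of_ringEquiv A e
  exists_isWeaklyRegular_of_isPrime p hp := by
    obtain ⟨rs, hlen, hmem, hrs⟩ :=
      exists_isWeaklyRegular_of_isPrime (p.comap e) (Ideal.comap_isPrime e p)
    refine ⟨rs.map e, by rw [List.length_map, hlen, e.height_comap], by simpa using hmem, ?_⟩
    refine (e.toAddEquiv.isWeaklyRegular_congr ?_).mp hrs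
    rw [List.forall₂_map_right_iff, List.forall₂_same]
    exact fun r _ x ↦ by simp

instance IsCohenMacaulayRing.mvPolynomial {σ : Type v} [Finite σ] (A : Type u) [CommRing A]
    [IsCohenMacaulayRing A] : IsCohenMacaulayRing (MvPolynomial σ A) := by
  induction σ using Finite.induction_empty_option with
  | of_equiv e _ => exact .of_ringEquiv (MvPolynomial.renameEquiv A e).toRingEquiv
  | h_empty => exact .of_ringEquiv (MvPolynomial.isEmptyRingEquiv A PEmpty).symm
  | h_option _ => exact .of_ringEquiv (MvPolynomial.optionEquivLeft A _).toRingEquiv.symm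

end PolynomialRing

section ExtRegularity

open CategoryTheory Limits Abelian RingTheory.Sequence

section Abelian

variable {C : Type*} [Category* C] [Abelian C] [HasExt.{u} C] {Y : C} {n : ℕ}

lemma ext_eq_zero_of_mk₀_g_comp_eq_zero {S : ShortComplex C} (hS : S.ShortExact)
    (hX₁ : ∀ m, m + 1 = n → Subsingleton (Ext S.X₁ Y m)) {e : Ext S.X₃ Y n}
    (he : (Ext.mk₀ S.g).comp e (zero_add n) = 0) : e = 0 := by
  cases n with
  | zero =>
    have := hS.epi_g
    obtain ⟨g, rfl⟩ := (Ext.mk₀_bijective _ _).surjective e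
    rw [Ext.mk₀_comp_mk₀, Ext.mk₀_eq_zero_iff] at he
    rw [zero_of_epi_comp S.g he, Ext.mk₀_zero]
  | succ m =>
    obtain ⟨x, rfl⟩ := Ext.contravariant_sequence_exact₃ hS Y e he (add_comm 1 m)
    rw [(hX₁ m rfl).elim x 0, Ext.comp_zero]

lemma ext_eq_zero_of_mk₀_comp_eq_zero {X Z : C} (f : X ⟶ Z)
    (hker : ∀ m, m + 1 = n → Subsingleton (Ext (kernel f) Y m))
    (hcoker : Subsingleton (Ext (cokernel f) Y n)) {e : Ext Z Y n}
    (he : (Ext.mk₀ f).comp e (zero_add n) = 0) : e = 0 := by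
  let S₁ := ShortComplex.mk (kernel.ι f) (Abelian.factorThruImage f)
    ((cancel_mono (Abelian.image.ι f)).mp (by simp))
  have hS₁ : S₁.ShortExact :=
    { exact := S₁.exact_of_f_is_kernel
        (isKernelOfComp _ _ (kernelIsKernel f) S₁.zero (Abelian.image.fac f)) }
  let S₂ := ShortComplex.mk (Abelian.image.ι f) (cokernel.π f) (kernel.condition _)
  have hS₂ : S₂.ShortExact := { exact := ShortComplex.exact_kernel (cokernel.π f) }
  have hι : (Ext.mk₀ (Abelian.image.ι f)).comp e (zero_add n) = 0 :=
    ext_eq_zero_of_mk₀_g_comp_eq_zero hS₁ hker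
      (by rwa [Ext.mk₀_comp_mk₀_assoc, Abelian.image.fac])
  obtain ⟨x, rfl⟩ := Ext.contravariant_sequence_exact₂ hS₂ Y e hι
  rw [hcoker.elim x 0, Ext.comp_zero]

end Abelian

variable {A : Type u} [CommRing A]

lemma smul_ext_eq_mk₀_comp {X Y : ModuleCat.{u} A} {n : ℕ} (r : A) (e : Ext X Y n) :
    r • e = (Ext.mk₀ (r • 𝟙 X)).comp e (zero_add n) := by
  rw [Ext.mk₀_smul, Ext.smul_comp, Ext.mk₀_id_comp]

lemma smul_ext_eq_zero_of_mem_annihilator {X Y : ModuleCat.{u} A} {n : ℕ} {r : A}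
    (hr : r ∈ Module.annihilator A X) (e : Ext X Y n) : r • e = 0 := by
  have : r • 𝟙 X = 0 := by
    ext x
    exact Module.mem_annihilator.mp hr x
  rw [smul_ext_eq_mk₀_comp, this, Ext.mk₀_zero, Ext.zero_comp]

lemma annihilator_sup_span_le_annihilator_kernel (N : ModuleCat.{u} A) (s : A) :
    Module.annihilator A N ⊔ Ideal.span {s} ≤ Module.annihilator A ↑(kernel (s • 𝟙 N)) := by
  have hι : Function.Injective (kernel.ι (s • 𝟙 N)).hom :=
    (ModuleCat.mono_iff_injective _).mp inferInstance
  refine sup_le ((kernel.ι (s • 𝟙 N)).hom.annihilator_le_of_injective hι) ?_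
  rw [Ideal.span_singleton_le_iff_mem, Module.mem_annihilator]
  intro x
  apply hι
  rw [map_smul, map_zero]
  exact ConcreteCategory.congr_hom (kernel.condition (s • 𝟙 N)) x

lemma annihilator_sup_span_le_annihilator_cokernel (N : ModuleCat.{u} A) (s : A) :
    Module.annihilator A N ⊔ Ideal.span {s} ≤ Module.annihilator A ↑(cokernel (s • 𝟙 N)) := by
  have hπ : Function.Surjective (cokernel.π (s • 𝟙 N)).hom :=
    (ModuleCat.epi_iff_surjective _).mp inferInstance
  refine sup_le ((cokernel.π (s • 𝟙 N)).hom.annihilator_le_of_surjective hπ) ?_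
  rw [Ideal.span_singleton_le_iff_mem, Module.mem_annihilator]
  intro x
  obtain ⟨x, rfl⟩ := hπ x
  rw [← map_smul]
  exact ConcreteCategory.congr_hom (cokernel.condition (s • 𝟙 N)) x

lemma isSMulRegular_ext_self [IsNoetherianRing A] {q : Ideal A} {t : ℕ} {N : ModuleCat.{u} A}
    [Module.Finite A N] (hN : q ^ t ≤ Module.annihilator A N) {s : A} {rs : List A}
    (hmem : ∀ r ∈ rs, r ∈ q ⊔ Ideal.span {s}) (hrs : IsWeaklyRegular A rs) {n : ℕ}
    (hn : n < rs.length) : IsSMulRegular (Ext N (ModuleCat.of A A) n) s := by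
  have hExt (K : ModuleCat.{u} A) [Module.Finite A K] (m : ℕ) (hm : m ≤ n)
      (hK : Module.annihilator A N ⊔ Ideal.span {s} ≤ Module.annihilator A K) :
      Subsingleton (Ext K (ModuleCat.of A A) m) := by
    refine subsingleton_ext_self_of_isWeaklyRegular (fun P hP ↦ ?_) hmem hrs (hm.trans_lt hn)
    have hP' := hK.trans (Module.mem_support_iff_of_finite.mp hP)
    exact sup_le (P.2.le_of_pow_le (hN.trans (le_sup_left.trans hP'))) (le_sup_right.trans hP')
  have : Module.Finite A ↑(kernel (s • 𝟙 N)) :=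
    .of_injective (kernel.ι (s • 𝟙 N)).hom ((ModuleCat.mono_iff_injective _).mp inferInstance)
  have : Module.Finite A ↑(cokernel (s • 𝟙 N)) :=
    .of_surjective (cokernel.π (s • 𝟙 N)).hom ((ModuleCat.epi_iff_surjective _).mp inferInstance)
  rw [isSMulRegular_iff_right_eq_zero_of_smul]
  intro e he
  rw [smul_ext_eq_mk₀_comp] at he
  exact ext_eq_zero_of_mk₀_comp_eq_zero (s • 𝟙 N)
    (fun m hm ↦ hExt _ m (by lia) (annihilator_sup_span_le_annihilator_kernel N s))
    (hExt _ n le_rfl (annihilator_sup_span_le_annihilator_cokernel N s)) he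

lemma isSMulRegular_ext_self_of_notMem [IsCohenMacaulayRing A] {q : Ideal A} [q.IsPrime] {t : ℕ}
    {N : ModuleCat.{u} A} [Module.Finite A N] (hN : q ^ t ≤ Module.annihilator A N) {s : A}
    (hs : s ∉ q) {n : ℕ} (hn : n ≤ q.height) : IsSMulRegular (Ext N (ModuleCat.of A A) n) s := by
  have hlt : q < q ⊔ Ideal.span {s} :=
    left_lt_sup.mpr fun h ↦ hs (h (Ideal.mem_span_singleton_self s))
  have hheight : ((n + 1 : ℕ) : ℕ∞) ≤ (q ⊔ Ideal.span {s}).height :=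
    Order.add_one_le_of_lt (hn.trans_lt (Ideal.height_strict_mono_of_isPrime hlt))
  obtain ⟨rs, hlen, hmem, hrs⟩ := exists_isWeaklyRegular_length_eq_of_le_height _ _ hheight
  exact isSMulRegular_ext_self hN hmem hrs (by lia)

end ExtRegularity

section ExtComparison

open CategoryTheory Limits CochainComplex.HomComplex

variable {C : Type*} [Category* C] [Abelian C] [HasExt.{u} C] {X Y : C}
  (P : ProjectiveResolution X) {n : ℕ}

lemma extMk_zero_degree_eq_zero_iff (f : P.complex.X 0 ⟶ Y) (hf : P.complex.d 1 0 ≫ f = 0) :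
    P.extMk f 1 rfl hf = 0 ↔ f = 0 := by
  have hX : IsZero (P.cochainComplex.X 1) := P.cochainComplex.isZero_of_isStrictlyLE 0 1
  rw [← P.extEquivCohomologyClass.apply_eq_iff_eq, P.extEquivCohomologyClass_extMk,
    P.extEquivCohomologyClass_zero, CohomologyClass.mk_eq_zero_iff,
    Cocycle.toSingleMk_mem_coboundaries_iff _ _ _ _ _ 1 (by simp)]
  simp [hX.eq_of_tgt (P.cochainComplex.d _ 1) 0, eq_comm (a := (0 : _ ⟶ Y))]

lemma extMk_eq_zero_iff_exists_prev_d_comp (f : P.complex.X n ⟶ Y) (m : ℕ) (hm : n + 1 = m)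
    (hf : P.complex.d m n ≫ f = 0) :
    P.extMk f m hm hf = 0 ↔
      ∃ g : P.complex.X ((ComplexShape.up ℕ).prev n) ⟶ Y, P.complex.d n _ ≫ g = f := by
  cases n with
  | zero =>
    subst hm
    rw [extMk_zero_degree_eq_zero_iff, P.complex.shape _ _ (by simp)]
    simp [eq_comm (a := f)]
  | succ l => rw [P.extMk_eq_zero_iff f _ hm hf l rfl, CochainComplex.prev_nat_succ]

variable {R : Type*} [CommRing R] [Linear R C]

lemma smul_extMk (r : R) (f : P.complex.X n ⟶ Y) (m : ℕ) (hm : n + 1 = m)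
    (hf : P.complex.d m n ≫ f = 0) :
    r • P.extMk f m hm hf =
      P.extMk (r • f) m hm (by rw [Linear.comp_smul, hf, smul_zero]) := by
  simp only [Abelian.Ext.smul_eq_comp_mk₀, P.extMk_comp_mk₀, Linear.comp_smul, Category.comp_id]

variable (R Y n) in
/-- The map sending an `n`-cocycle of `Hom(P, Y)` to its class in `Abelian.Ext X Y n`, for a
projective resolution `P` of `X`. -/
noncomputable def cocyclesToExt :
    LinearMap.ker ((P.complex.linearYonedaObj R Y).sc n).g.hom →ₗ[R] Abelian.Ext X Y n where
  toFun f := P.extMk f.1 ((ComplexShape.up ℕ).next n) (by simp) f.2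
  map_add' f g := (P.add_extMk ..).symm
  map_smul' r f := (smul_extMk P r ..).symm

lemma cocyclesToExt_surjective : Function.Surjective (cocyclesToExt Y P n R) := fun e ↦ by
  obtain ⟨f, hf, rfl⟩ := P.extMk_surjective e ((ComplexShape.up ℕ).next n) (by simp)
  exact ⟨⟨f, hf⟩, rfl⟩

lemma ker_cocyclesToExt : LinearMap.ker (cocyclesToExt Y P n R) =
    LinearMap.range ((P.complex.linearYonedaObj R Y).sc n).moduleCatToCycles := by
  ext f
  exact (extMk_eq_zero_iff_exists_prev_d_comp P f.1 _ (by simp) f.2).trans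
    (exists_congr fun _ ↦ ⟨fun h ↦ Subtype.ext h, congrArg Subtype.val⟩)

variable (R X Y n) in
/-- The comparison of the two models of `Ext`: the left derived functors of `Hom(-, Y)`, which
define local cohomology, and the morphisms in the derived category, which carry the long exact
sequences. -/
noncomputable def extLinearEquiv [EnoughProjectives C] :
    ((Ext R C n).obj (Opposite.op X)).obj Y ≃ₗ[R] Abelian.Ext X Y n :=
  let P := projectiveResolution X
  (P.isoExt n Y ≪≫
    ((P.complex.linearYonedaObj R Y).sc n).moduleCatHomologyIso).toLinearEquiv ≪≫ₗ
  Submodule.quotEquivOfEq _ _ (ker_cocyclesToExt P).symm ≪≫ₗ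
  (cocyclesToExt Y P n R).quotKerEquivOfSurjective (cocyclesToExt_surjective P)

end ExtComparison

section LocalCohomology

open CategoryTheory Limits Opposite

section FilteredColimit

variable {A : Type*} [CommRing A] {D : Type*} [Category* D] {F : D ⥤ ModuleCat.{v} A}
  [PreservesColimit F (forget (ModuleCat A))] {c : Cocone F}

lemma exists_pow_smul_eq_zero_of_isColimit (hc : IsColimit c) {s : A}
    (hF : ∀ t (y : F.obj t), ∃ m : ℕ, s ^ m • y = 0) (x : c.pt) : ∃ m : ℕ, s ^ m • x = 0 := by
  obtain ⟨t, y, rfl⟩ := Concrete.isColimit_exists_rep F hc x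
  obtain ⟨m, hm⟩ := hF t y
  exact ⟨m, by rw [← map_smul, hm, map_zero]⟩

lemma isSMulRegular_of_isColimit [IsFiltered D] (hc : IsColimit c) {s : A}
    (hF : ∀ t, IsSMulRegular (F.obj t) s) : IsSMulRegular c.pt s := by
  rw [isSMulRegular_iff_right_eq_zero_of_smul]
  intro x hx
  obtain ⟨t, y, rfl⟩ := Concrete.isColimit_exists_rep F hc x
  rw [← map_smul, ← map_zero (c.ι.app t).hom] at hx
  obtain ⟨t', g, g', h⟩ := Concrete.isColimit_exists_of_rep_eq F hc (s • y) 0 hx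
  have hy : F.map g y = 0 :=
    (hF t').right_eq_zero_of_smul (by rw [← map_smul, h, map_zero])
  rw [← c.w g, ConcreteCategory.comp_apply, hy, map_zero]

end FilteredColimit

variable {A : Type u} [CommRing A]

instance : PreservesFilteredColimitsOfSize.{0, 0} (forget (ModuleCat.{u} A)) :=
  preservesSmallestFilteredColimits_of_preservesFilteredColimits _

section

variable (J : Ideal A) (i : ℕ) (M : ModuleCat.{u} A)

/-- The cocone with point `H^i_J(M)` over the system of the `Ext^i(A / J ^ t, M)`; `localCohomology`
takes the colimit in a functor category, and this is its value at `M`. -/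
noncomputable def localCohomologyCocone : Cocone
    (localCohomology.diagram (localCohomology.idealPowersDiagram J) i ⋙ (evaluation _ _).obj M) :=
  have := localCohomology.hasColimitDiagram.{u, 0} (localCohomology.idealPowersDiagram J) i
  ((evaluation _ _).obj M).mapCocone (colimit.cocone _)

/-- `H^i_J(M)` is the colimit of the `Ext^i(A / J ^ t, M)`. -/
noncomputable def isColimitLocalCohomologyCocone : IsColimit (localCohomologyCocone J i M) :=
  have := localCohomology.hasColimitDiagram.{u, 0} (localCohomology.idealPowersDiagram J) i
  isColimitOfPreserves ((evaluation _ _).obj M) (colimit.isColimit _)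

end

lemma exists_pow_smul_localCohomology_eq_zero {J : Ideal A} {s : A} (hs : s ∈ J) {i : ℕ}
    {M : ModuleCat.{u} A} (x : (localCohomology J i).obj M) : ∃ m : ℕ, s ^ m • x = 0 := by
  have hExt (t : ℕ) (y : ((Ext A (ModuleCat.{u} A) i).obj (op (.of A (A ⧸ J ^ t)))).obj M) :
      s ^ t • y = 0 := by
    have hann : s ^ t ∈ Module.annihilator A (A ⧸ J ^ t) := by
      rw [Ideal.annihilator_quotient]
      exact Ideal.pow_mem_pow hs t
    apply (extLinearEquiv _ M i A).injective
    rw [map_smul, map_zero, smul_ext_eq_zero_of_mem_annihilator hann]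
  exact exists_pow_smul_eq_zero_of_isColimit (isColimitLocalCohomologyCocone J i M)
    (fun t y ↦ ⟨t.unop.unop, hExt _ y⟩) x

lemma isSMulRegular_localCohomology_self [IsCohenMacaulayRing A] {q : Ideal A} [q.IsPrime] {s : A}
    (hs : s ∉ q) {j : ℕ} (hj : j ≤ q.height) :
    IsSMulRegular ((localCohomology q j).obj (ModuleCat.of A A)) s := by
  have hExt (t : ℕ) : IsSMulRegular
      (((Ext A (ModuleCat.{u} A) j).obj (op (.of A (A ⧸ q ^ t)))).obj (.of A A)) s :=
    ((extLinearEquiv _ _ j A).isSMulRegular_congr s).mpr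
      (isSMulRegular_ext_self_of_notMem Ideal.annihilator_quotient.ge hs hj)
  exact isSMulRegular_of_isColimit (isColimitLocalCohomologyCocone q j (ModuleCat.of A A))
    fun t ↦ hExt t.unop.unop

end LocalCohomology

lemma idealHeight_eq_height {A : Type*} [CommRing A] (I : Ideal A) :
    idealHeight I = I.height := by
  rw [idealHeight, Ideal.height_eq_inf_minimalPrimes, iInf_subtype]
  exact iInf_congr fun p ↦ iInf_congr fun hp ↦
    (PrimeSpectrum.height_eq_orderHeight ⟨p, hp.1.1⟩).symm

theorem stmt_1_general {A : Type u} [CommRing A] [IsCohenMacaulayRing A] {I q : Ideal A}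
    [q.IsPrime] (hIq : ¬ I ≤ q) (i : ℕ) {j : ℕ} (hj : j ≤ q.height) {M : ModuleCat.{u} A}
    (f : (localCohomology I i).obj M →ₗ[A] (localCohomology q j).obj (ModuleCat.of A A)) :
    f = 0 := by
  obtain ⟨s, hsI, hsq⟩ := SetLike.not_le_iff_exists.mp hIq
  ext x
  obtain ⟨m, hm⟩ := exists_pow_smul_localCohomology_eq_zero hsI x
  have hreg := isSMulRegular_localCohomology_self
    (fun h ↦ hsq (Ideal.IsPrime.mem_of_pow_mem ‹_› m h)) hj
  exact hreg.right_eq_zero_of_smul (by rw [← map_smul, hm, map_zero])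

/-- If `p ⊄ q` are primes of `R = k[x₁,…,xₙ]` with heights `i` and `j`, then
`Hom_R(H^i_p(R), H^j_q(R)) = 0`. -/
theorem stmt_1 (n : ℕ) (k : Type) [Field k]
    (p q : Ideal (MvPolynomial (Fin n) k)) (hp : p.IsPrime) (hq : q.IsPrime)
    (hpq : ¬ p ≤ q) (i j : ℕ)
    (hi : idealHeight p = (i : ℕ∞)) (hj : idealHeight q = (j : ℕ∞)) :
    ∀ f : ((localCohomology p i).obj (ModuleCat.of _ (MvPolynomial (Fin n) k))) →ₗ[MvPolynomial (Fin n) k]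
        ((localCohomology q j).obj (ModuleCat.of _ (MvPolynomial (Fin n) k))),
      f = 0 :=
  stmt_1_general hpq i (hj.ge.trans_eq (idealHeight_eq_height q))
end

section
/- Let R = k[x_1,...,x_n] and let α ∈ {-1,0}^n with p_α = (x_i : α_i = -1), l = |α|. Every Z^n-graded R-module endomorphism of H^l_{p_α}(R) is multiplication by a scalar in k; more precisely, the restriction map from graded endomorphisms of H^l_{p_α}(R) to k-linear endomorphisms of its degree-α component (a 1-dimensional space) is bijective. -/
open MvPolynomial

/-- `a ∈ Ω = {-1,0}^n`. -/
def isOm {n : ℕ} (a : Fin n → ℤ) : Prop := ∀ i, a i = 0 ∨ a i = -1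

/-- The face prime ideal `p_a = (xᵢ : a i = -1)`. -/
noncomputable def faceIdeal {n : ℕ} (k : Type*) [CommSemiring k] (a : Fin n → ℤ) :
    Ideal (MvPolynomial (Fin n) k) :=
  Ideal.span (MvPolynomial.X '' {i | a i = -1})

/-- `|a|`, the number of `-1` entries of `a ∈ Ω`. -/
def wt {n : ℕ} (a : Fin n → ℤ) : ℕ := (Finset.univ.filter fun i => a i = -1).card

/-- The local cohomology module `H^r_I(R)` for `R = k[x₁,…,xₙ]`, as a type. -/
abbrev LC {n : ℕ} (k : Type) [Field k] (I : Ideal (MvPolynomial (Fin n) k)) (r : ℕ) : Type :=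
  ((localCohomology I r).obj
    (ModuleCat.of (MvPolynomial (Fin n) k) (MvPolynomial (Fin n) k)))

/-- A family of `k`-subspaces indexed by `ℤⁿ` is a compatible `ℤⁿ`-grading of an
`R = k[x₁,…,xₙ]`-module when multiplication by `xᵢ` raises degrees by `eᵢ`. -/
def GradingCompat {n : ℕ} (k : Type) [Field k] (M : Type*) [AddCommGroup M]
    [Module (MvPolynomial (Fin n) k) M] [Module k M]
    (g : (Fin n → ℤ) → Submodule k M) : Prop :=
  ∀ (i : Fin n) (d : Fin n → ℤ), ∀ m ∈ g d,
    (MvPolynomial.X i : MvPolynomial (Fin n) k) • m ∈ g (d + Pi.single i 1)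

/-!
Write `M(T)` for the module with one basis vector in each degree that is negative exactly at the
indices in `T`. For `j ∉ T` there is an exact sequence `0 → M(T) → E → M(T ∪ {j}) → 0` in which the
sign condition at `j` is dropped from `E`, so that `X j` acts bijectively on `E`. As `X j` is
nilpotent on `R ⧸ I ^ t`, all `Ext (R ⧸ I ^ t, E)` vanish and the connecting morphisms give
`H^{r+1}(M(T)) ≅ H^r(M(T ∪ {j}))`. Starting at `R = M(∅)` this yields `H^{|T|}(R) ≅ H^0(M(T))`,
which is `M(T)` because `M(T)` is torsion for the ideal generated by the variables in `T`.

A graded endomorphism of `M(T)` multiplies each basis vector by a scalar. Any two degrees of `M(T)`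
have a common lower bound, from which monomials reach both; hence the scalars agree.
-/

section DerivedConnecting

open CategoryTheory Limits Opposite

noncomputable section

section LeftDerived

variable {C D : Type*} [Category* C] [Category* D] [Abelian C] [Abelian D]

section Connecting

variable (S : ShortComplex (C ⥤ D)) [S.X₁.Additive] [S.X₂.Additive] [S.X₃.Additive]

/-- The short complex of chain complexes obtained by applying a short complex of additive functors
degreewise. -/
@[simps]
def mapChainComplex : ChainComplex C ℕ ⥤ ShortComplex (ChainComplex D ℕ) where
  obj K :=
    ShortComplex.mk ((NatTrans.mapHomologicalComplex S.f _).app K)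
      ((NatTrans.mapHomologicalComplex S.g _).app K) (by
        ext i
        exact NatTrans.congr_app S.zero (K.X i))
  map φ :=
    { τ₁ := (S.X₁.mapHomologicalComplex _).map φ
      τ₂ := (S.X₂.mapHomologicalComplex _).map φ
      τ₃ := (S.X₃.mapHomologicalComplex _).map φ
      comm₁₂ := (NatTrans.mapHomologicalComplex S.f _).naturality φ
      comm₂₃ := (NatTrans.mapHomologicalComplex S.g _).naturality φ }

variable {S}

lemma shortExact_mapChainComplex
    (hS : ∀ (X : C) [Projective X], (S.map ((evaluation C D).obj X)).ShortExact)
    {X : C} (P : ProjectiveResolution X) :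
    ((mapChainComplex S).obj P.complex).ShortExact :=
  HomologicalComplex.shortExact_of_degreewise_shortExact _ fun i => hS (P.complex.X i)

variable (hS : ∀ (X : C) [Projective X], (S.map ((evaluation C D).obj X)).ShortExact)

/-- The connecting morphism of `leftDerivedConnecting`, computed on a projective resolution. -/
def resolutionConnecting (n : ℕ) {X : C} (P : ProjectiveResolution X) :
    (S.X₃.mapHomologicalComplex _ ⋙ HomologicalComplex.homologyFunctor _ _ (n + 1)).obj P.complex ⟶
      (S.X₁.mapHomologicalComplex _ ⋙ HomologicalComplex.homologyFunctor _ _ n).obj P.complex :=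
  (shortExact_mapChainComplex hS P).δ (n + 1) n (by simp)

lemma resolutionConnecting_naturality (n : ℕ) {X Y : C} (P : ProjectiveResolution X)
    (Q : ProjectiveResolution Y) (φ : P.complex ⟶ Q.complex) :
    (S.X₃.mapHomologicalComplex _ ⋙ HomologicalComplex.homologyFunctor _ _ (n + 1)).map φ ≫
        resolutionConnecting hS n Q =
      resolutionConnecting hS n P ≫
        (S.X₁.mapHomologicalComplex _ ⋙ HomologicalComplex.homologyFunctor _ _ n).map φ :=
  (HomologicalComplex.HomologySequence.δ_naturality ((mapChainComplex S).map φ)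
    (shortExact_mapChainComplex hS P) (shortExact_mapChainComplex hS Q) (n + 1) n (by simp)).symm

variable [HasProjectiveResolutions C]

/-- The connecting transformation of left derived functors attached to a short complex of additive
functors which is short exact on projective objects. -/
def leftDerivedConnecting (n : ℕ) : S.X₃.leftDerived (n + 1) ⟶ S.X₁.leftDerived n where
  app X :=
    ((projectiveResolution X).isoLeftDerivedObj S.X₃ (n + 1)).hom ≫
      resolutionConnecting hS n (projectiveResolution X) ≫
      ((projectiveResolution X).isoLeftDerivedObj S.X₁ n).inv
  naturality X Y f := by
    generalize projectiveResolution X = P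
    generalize projectiveResolution Y = Q
    let φ : P.complex ⟶ Q.complex := ProjectiveResolution.lift f P Q
    have φ_comm : φ.f 0 ≫ Q.π.f 0 = P.π.f 0 ≫ f := ProjectiveResolution.lift_commutes_zero f P Q
    rw [← Category.assoc,
      ProjectiveResolution.isoLeftDerivedObj_hom_naturality f P Q φ φ_comm S.X₃ (n + 1)]
    simp only [Category.assoc]
    rw [ProjectiveResolution.isoLeftDerivedObj_inv_naturality f P Q φ φ_comm S.X₁ n,
      ← Category.assoc (resolutionConnecting hS n P), ← resolutionConnecting_naturality hS n P Q,
      Category.assoc]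

lemma isIso_leftDerivedConnecting_app (n : ℕ) (X : C)
    (h : IsZero ((S.X₂.leftDerived n).obj X)) (h' : IsZero ((S.X₂.leftDerived (n + 1)).obj X)) :
    IsIso ((leftDerivedConnecting hS n).app X) := by
  let P := projectiveResolution X
  have : IsIso (resolutionConnecting hS n P) :=
    ShortComplex.ShortExact.isIso_δ _ _ _ _
      (h'.of_iso (P.isoLeftDerivedObj S.X₂ (n + 1)).symm)
      (h.of_iso (P.isoLeftDerivedObj S.X₂ n).symm)
  dsimp only [leftDerivedConnecting]
  infer_instance

end Connecting

variable [HasProjectiveResolutions C] (F : C ⥤ D) [F.Additive]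

lemma leftDerived_map_zero (n : ℕ) (X Y : C) : (F.leftDerived n).map (0 : X ⟶ Y) = 0 := by
  have lift : (0 : (projectiveResolution X).complex ⟶ (projectiveResolution Y).complex) ≫
      (projectiveResolution Y).π = (projectiveResolution X).π ≫ (ChainComplex.single₀ C).map 0 := by
    simp
  rw [F.leftDerived_map_eq n _ _ lift, Functor.map_zero, zero_comp, comp_zero]

lemma leftDerived_app_eq_map_smul {R : Type*} [Semiring R] [Linear R C] (r : R) (α : F ⟶ F)
    (hα : ∀ X, α.app X = F.map (r • 𝟙 X)) (n : ℕ) (X : C) :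
    (NatTrans.leftDerived α n).app X = (F.leftDerived n).map (r • 𝟙 X) := by
  let P := projectiveResolution X
  have lift : (r • 𝟙 P.complex) ≫ P.π = P.π ≫ (ChainComplex.single₀ C).map (r • 𝟙 X) := by
    apply HomologicalComplex.to_single_hom_ext
    rw [HomologicalComplex.comp_f, HomologicalComplex.comp_f, HomologicalComplex.smul_f_apply,
      HomologicalComplex.id_f, ChainComplex.single₀_map_f_zero, Linear.smul_comp, Category.id_comp]
    exact ((Linear.comp_smul _ _ _ (P.π.f 0) r (𝟙 X)).trans
      (congrArg (r • ·) (Category.comp_id _))).symm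
  have chain_map : (NatTrans.mapHomologicalComplex α _).app P.complex =
      (F.mapHomologicalComplex _).map (r • 𝟙 P.complex) := by
    ext i
    exact hα (P.complex.X i)
  rw [ProjectiveResolution.leftDerived_app_eq α P, F.leftDerived_map_eq n _ _ lift, chain_map]
  rfl

end LeftDerived

section Ext

variable {R : Type*} [Ring R] {C : Type*} [Category* C] [Abelian C] [Linear R C]

/-- The contravariant functors `Hom(-, S.Xᵢ)` of a short complex `S`, as covariant functors to the
opposite category, which is where `Ext` derives them. -/
abbrev homShortComplex (S : ShortComplex C) : ShortComplex (C ⥤ (ModuleCat R)ᵒᵖ) :=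
  ShortComplex.mk (X₁ := ((linearYoneda R C).obj S.X₃).rightOp)
    (X₂ := ((linearYoneda R C).obj S.X₂).rightOp) (X₃ := ((linearYoneda R C).obj S.X₁).rightOp)
    (NatTrans.rightOp ((linearYoneda R C).map S.g)) (NatTrans.rightOp ((linearYoneda R C).map S.f))
    (by
      ext X
      apply Quiver.Hom.unop_inj
      ext (φ : X ⟶ S.X₁)
      change (φ ≫ S.f) ≫ S.g = 0
      simp)

lemma shortExact_homShortComplex {S : ShortComplex C} (hS : S.ShortExact) (X : C) [Projective X] :
    ((homShortComplex (R := R) S).map ((evaluation _ _).obj X)).ShortExact := by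
  have := hS.mono_f
  have := hS.epi_g
  let H := (linearYoneda R C).flip.obj (op X)
  have hH : (S.map H).ShortExact :=
    { exact := by
        rw [ShortComplex.moduleCat_exact_iff]
        intro (φ : X ⟶ S.X₂) (hφ : φ ≫ S.g = 0)
        exact ⟨hS.exact.lift φ hφ, hS.exact.lift_f φ hφ⟩
      mono_f := (ModuleCat.mono_iff_injective _).2
        fun (_ : X ⟶ S.X₁) (_ : X ⟶ S.X₁) h => (cancel_mono S.f).1 h
      epi_g := (ModuleCat.epi_iff_surjective _).2
        fun (φ : X ⟶ S.X₃) => ⟨Projective.factorThru φ S.g, Projective.factorThru_comp φ S.g⟩ }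
  exact hH.op

variable [EnoughProjectives C]

/-- The connecting transformation `Ext n (-, S.X₃) ⟶ Ext (n + 1) (-, S.X₁)` of a short exact
sequence in the second variable. -/
def extConnecting {S : ShortComplex C} (hS : S.ShortExact) (n : ℕ) :
    (Ext R C n).flip.obj S.X₃ ⟶ (Ext R C (n + 1)).flip.obj S.X₁ :=
  NatTrans.leftOp (leftDerivedConnecting (fun X _ => shortExact_homShortComplex (R := R) hS X) n)

lemma isIso_extConnecting_app {S : ShortComplex C} (hS : S.ShortExact) (n : ℕ) (X : C)
    (h : ∀ i, IsZero (((Ext R C i).obj (op X)).obj S.X₂)) :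
    IsIso ((extConnecting (R := R) hS n).app (op X)) := by
  have := isIso_leftDerivedConnecting_app
    (fun X _ => shortExact_homShortComplex (R := R) hS X) n X (h n).op (h (n + 1)).op
  exact isIso_unop ((leftDerivedConnecting
    (fun X _ => shortExact_homShortComplex (R := R) hS X) n).app X)

lemma ext_map_smul_eq (r : R) (n : ℕ) (X Y : C) :
    ((Ext R C n).obj (op X)).map (r • 𝟙 Y) = ((Ext R C n).map (r • 𝟙 X).op).app Y := by
  refine congrArg Quiver.Hom.unop (leftDerived_app_eq_map_smul
    ((linearYoneda R C).obj Y).rightOp r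
    (NatTrans.rightOp ((linearYoneda R C).map (r • 𝟙 Y))) (fun Z => ?_) n X)
  apply Quiver.Hom.unop_inj
  ext (φ : Z ⟶ Y)
  change φ ≫ (r • 𝟙 Y) = (r • 𝟙 Z) ≫ φ
  simp

lemma isZero_ext_of_smul (r : R) {X Y : C} (hX : r • 𝟙 X = 0) (hY : IsIso (r • 𝟙 Y)) (n : ℕ) :
    IsZero (((Ext R C n).obj (op X)).obj Y) := by
  have zero_map : ((Ext R C n).map (r • 𝟙 X).op).app Y = 0 :=
    congrArg Quiver.Hom.unop
      ((congrArg _ hX).trans (leftDerived_map_zero ((linearYoneda R C).obj Y).rightOp n X X))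
  rw [← ext_map_smul_eq] at zero_map
  exact IsZero.of_mono_eq_zero _ zero_map

end Ext

end

end DerivedConnecting

section LocalCohomology

open CategoryTheory Limits Opposite localCohomology

noncomputable section

universe u

variable {R : Type u} [CommRing R]

/-- The inverse system of quotients `R ⧸ I ^ t`. -/
abbrev powerQuotients (I : Ideal R) : ℕᵒᵖ ⥤ ModuleCat.{u} R :=
  ringModIdeals (idealPowersDiagram I)

/-- Local cohomology of `Y` is the colimit of `Ext n (R ⧸ I ^ t, Y)`. -/
def localCohomologyObjIso (I : Ideal R) (n : ℕ) (Y : ModuleCat.{u} R) :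
    (localCohomology I n).obj Y ≅
      colimit ((powerQuotients I).op ⋙ (Ext R (ModuleCat.{u} R) n).flip.obj Y) :=
  colimitObjIsoColimitCompEvaluation (diagram (idealPowersDiagram I) n) Y

section Shift

variable {I : Ideal R} {y : R}

lemma pow_smul_id_powerQuotients (hy : y ∈ I) (t : ℕ) :
    y ^ t • 𝟙 ((powerQuotients I).obj (op t)) = 0 := by
  refine ModuleCat.hom_ext (LinearMap.ext fun (x : R ⧸ I ^ t) => ?_)
  obtain ⟨r, rfl⟩ := Submodule.Quotient.mk_surjective _ x
  exact (Submodule.Quotient.mk_eq_zero _).2 (Ideal.mul_mem_right r _ (Ideal.pow_mem_pow hy t))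

lemma isIso_pow_smul_id {Y : ModuleCat.{u} R} (hy : Function.Bijective (y • · : Y → Y)) (t : ℕ) :
    IsIso (y ^ t • 𝟙 Y) := by
  refine (ConcreteCategory.isIso_iff_bijective _).2 ?_
  have := hy.iterate t
  rwa [smul_iterate] at this

/-- If some `y ∈ I` acts bijectively on the middle term of a short exact sequence, the connecting
morphism identifies local cohomology of the outer terms. -/
def localCohomologyShiftIso {S : ShortComplex (ModuleCat.{u} R)} (hS : S.ShortExact) (hy : y ∈ I)
    (hS₂ : Function.Bijective (y • · : S.X₂ → S.X₂)) (n : ℕ) :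
    (localCohomology I n).obj S.X₃ ≅ (localCohomology I (n + 1)).obj S.X₁ :=
  have : ∀ t, IsIso ((Functor.whiskerLeft (powerQuotients I).op
      (extConnecting (R := R) hS n)).app t) := fun t =>
    isIso_extConnecting_app hS n _ fun i => isZero_ext_of_smul (y ^ t.unop.unop)
      (pow_smul_id_powerQuotients hy _) (isIso_pow_smul_id hS₂ _) i
  have := NatIso.isIso_of_isIso_app (Functor.whiskerLeft (powerQuotients I).op
    (extConnecting (R := R) hS n))
  localCohomologyObjIso I n S.X₃ ≪≫
    HasColimit.isoOfNatIso (asIso (Functor.whiskerLeft _ (extConnecting hS n))) ≪≫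
    (localCohomologyObjIso I (n + 1) S.X₁).symm

end Shift

section DegreeZero

instance preservesFiniteColimits_linearYoneda_rightOp (Y : ModuleCat.{u} R) :
    PreservesFiniteColimits ((linearYoneda R (ModuleCat.{u} R)).obj Y).rightOp := by
  have : PreservesLimits ((linearYoneda R (ModuleCat.{u} R)).obj Y ⋙ forget _) :=
    inferInstanceAs (PreservesLimits (yoneda.obj Y))
  have : PreservesLimits ((linearYoneda R (ModuleCat.{u} R)).obj Y) :=
    preservesLimits_of_reflects_of_preserves _ (forget _)
  exact preservesFiniteColimits_rightOp _

/-- `Ext 0 (-, Y)` is `Hom(-, Y)`. -/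
def extZeroIso (Y : ModuleCat.{u} R) :
    (Ext R (ModuleCat.{u} R) 0).flip.obj Y ≅ (linearYoneda R (ModuleCat.{u} R)).obj Y :=
  ((Functor.leftOpRightOpEquiv _ _).inverse.mapIso
    ((linearYoneda R (ModuleCat.{u} R)).obj Y).rightOp.leftDerivedZeroIsoSelf).unop.symm

variable (I : Ideal R) (Y : ModuleCat.{u} R)

/-- Evaluation at `1`, as a cocone from the system of modules `Hom(R ⧸ I ^ t, Y)` to `Y`. -/
def evalOneCocone :
    Cocone ((powerQuotients I).op ⋙ (linearYoneda R (ModuleCat.{u} R)).obj Y) where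
  pt := Y
  ι :=
    { app t := ModuleCat.ofHom (X := ModuleCat.of R (R ⧸ I ^ t.unop.unop) ⟶ Y) (Y := Y)
        { toFun φ := φ (Submodule.Quotient.mk 1)
          map_add' _ _ := rfl
          map_smul' _ _ := rfl }
      naturality s t f := by
        ext (φ : ModuleCat.of R (R ⧸ I ^ s.unop.unop) ⟶ Y)
        rfl }

variable {Y}

lemma injective_evalOneCocone_ι_app (t) : Function.Injective ((evalOneCocone I Y).ι.app t) := by
  intro (φ : ModuleCat.of R (R ⧸ I ^ t.unop.unop) ⟶ Y)
    (ψ : ModuleCat.of R (R ⧸ I ^ t.unop.unop) ⟶ Y) (h : φ (Submodule.Quotient.mk 1) = ψ _)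
  exact ModuleCat.hom_ext (Submodule.linearMap_qext _ (LinearMap.ext_ring h))

lemma exists_evalOneCocone_ι_app_eq (y : Y) (t : ℕ) (hy : ∀ r ∈ I ^ t, r • y = 0) :
    ∃ φ, (evalOneCocone I Y).ι.app (op (op t)) φ = y :=
  ⟨ModuleCat.ofHom (Submodule.liftQ (I ^ t) (LinearMap.toSpanSingleton R Y y) hy), one_smul R y⟩

variable {I}

lemma bijective_desc_evalOneCocone (hY : ∀ y : Y, ∃ t : ℕ, ∀ r ∈ I ^ t, r • y = 0) :
    Function.Bijective (colimit.desc _ (evalOneCocone I Y)) := by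
  let G := (powerQuotients I).op ⋙ (linearYoneda R (ModuleCat.{u} R)).obj Y
  have desc_ι := fun t => ConcreteCategory.congr_hom (colimit.ι_desc (evalOneCocone I Y) t)
  have : PreservesFilteredColimitsOfSize.{0, 0} (forget (ModuleCat.{u} R)) :=
    preservesSmallestFilteredColimits_of_preservesFilteredColimits _
  constructor
  · rw [injective_iff_map_eq_zero]
    intro x hx
    obtain ⟨t, φ, rfl⟩ := Concrete.colimit_exists_rep G x
    have : φ = 0 := injective_evalOneCocone_ι_app I t (by
      rw [map_zero]; exact (desc_ι t φ).symm.trans hx)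
    rw [this, map_zero]
  · intro y
    obtain ⟨t, ht⟩ := hY y
    obtain ⟨φ, hφ⟩ := exists_evalOneCocone_ι_app_eq I y t ht
    exact ⟨colimit.ι G (op (op t)) φ, (desc_ι _ φ).trans hφ⟩

/-- An `I`-torsion module is its own local cohomology in degree zero. -/
def localCohomologyZeroIso (hY : ∀ y : Y, ∃ t : ℕ, ∀ r ∈ I ^ t, r • y = 0) :
    (localCohomology I 0).obj Y ≅ Y :=
  localCohomologyObjIso I 0 Y ≪≫
    HasColimit.isoOfNatIso (Functor.isoWhiskerLeft _ (extZeroIso Y)) ≪≫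
    (LinearEquiv.ofBijective _ (bijective_desc_evalOneCocone hY)).toModuleIso

end DegreeZero

end

end LocalCohomology

section ZeroExtend

variable {G M : Type*} [Zero M] {D : Set G}

/-- A family indexed by `D`, extended by zero to all indices. -/
noncomputable def zeroExtend (b : D → M) : G → M :=
  Function.extend (↑) b 0

lemma zeroExtend_of_mem (b : D → M) {d : G} (hd : d ∈ D) : zeroExtend b d = b ⟨d, hd⟩ :=
  Subtype.val_injective.extend_apply b 0 ⟨d, hd⟩

lemma zeroExtend_of_notMem (b : D → M) {d : G} (hd : d ∉ D) : zeroExtend b d = 0 :=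
  Function.extend_apply' _ _ _ (by simpa using hd)

lemma map_zeroExtend {N F : Type*} [Zero N] [FunLike F M N] [ZeroHomClass F M N] (f : F)
    (b : D → M) (d : G) : f (zeroExtend b d) = zeroExtend (f ∘ b) d := by
  by_cases hd : d ∈ D
  · simp only [zeroExtend_of_mem _ hd, Function.comp_apply]
  · simp only [zeroExtend_of_notMem _ hd, map_zero]

end ZeroExtend

section Exponent

variable {σ : Type*}

/-- The inclusion of exponent vectors of monomials into the group of degrees. -/
@[simps]
def exponent : (σ →₀ ℕ) →+ (σ → ℤ) where
  toFun m i := m i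
  map_zero' := by ext; simp
  map_add' m m' := by ext; simp

lemma exponent_nonneg (m : σ →₀ ℕ) : 0 ≤ exponent m := fun i => Int.natCast_nonneg (m i)

lemma exponent_injective : Function.Injective (exponent : (σ →₀ ℕ) → σ → ℤ) := fun _ _ h =>
  Finsupp.ext fun i => Int.ofNat_inj.1 (congrFun h i)

lemma exists_exponent_eq [Finite σ] {v : σ → ℤ} (hv : 0 ≤ v) : ∃ m : σ →₀ ℕ, exponent m = v :=
  ⟨Finsupp.equivFunOnFinite.symm fun i => (v i).toNat, funext fun i => Int.toNat_of_nonneg (hv i)⟩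

end Exponent

universe u v in
/-- The free module with one basis vector in each degree `d ∈ D`. When `D` is order-connected it is
the module over the polynomial ring which is a subquotient of the Laurent polynomial ring: a
monomial translates degrees, and kills whatever it moves out of `D`. -/
def MonomialModule {G : Type u} (k : Type v) [Semiring k] (D : Set G) : Type (max u v) :=
  D →₀ k

namespace MonomialModule

open Module

noncomputable section

section Basis

variable {G k : Type*} [CommRing k] {D : Set G}

instance : AddCommGroup (MonomialModule k D) := inferInstanceAs (AddCommGroup (D →₀ k))

instance : Module k (MonomialModule k D) := inferInstanceAs (Module k (D →₀ k))

variable (k D) in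
/-- The defining basis of a monomial module. -/
def basis : Basis D k (MonomialModule k D) :=
  Finsupp.basisSingleOne (ι := D)

variable (D) in
/-- The basis vector of degree `d`, or zero when `d ∉ D`. -/
def mono (d : G) : MonomialModule k D :=
  zeroExtend (basis k D) d

lemma mono_of_mem {d : G} (hd : d ∈ D) : mono D d = basis k D ⟨d, hd⟩ := zeroExtend_of_mem _ hd

lemma mono_of_notMem {d : G} (hd : d ∉ D) : mono (k := k) D d = 0 := zeroExtend_of_notMem _ hd

lemma hom_ext {M : Type*} [AddCommMonoid M] [Module k M] {f g : MonomialModule k D →ₗ[k] M}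
    (h : ∀ d ∈ D, f (mono D d) = g (mono D d)) : f = g :=
  (basis k D).ext fun d => by simpa only [mono_of_mem d.2] using h d d.2

end Basis

section Shift

variable {G k : Type*} [AddCommMonoid G] [CommRing k] {D E F : Set G}

variable (k D E) in
/-- Translation of degrees by `v`, killing what falls outside `E`. -/
def shift (v : G) : MonomialModule k D →ₗ[k] MonomialModule k E :=
  (basis k D).constr k fun d => mono E (d + v)

lemma shift_mono {v d : G} (hd : d + v ∈ E → d ∈ D) :
    shift k D E v (mono D d) = mono E (d + v) := by
  by_cases h : d ∈ D
  · rw [mono_of_mem h, shift, Basis.constr_basis]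
  · rw [mono_of_notMem h, map_zero, mono_of_notMem (mt hd h)]

lemma shift_comp_shift {v w : G} (h : ∀ d ∈ D, d + v + w ∈ F → d + v ∈ E) :
    shift k E F w ∘ₗ shift k D E v = shift k D F (v + w) :=
  hom_ext fun d hd => by
    rw [LinearMap.comp_apply, shift_mono fun _ => hd, shift_mono (h d hd), shift_mono fun _ => hd,
      add_assoc]

lemma shift_zero : shift k D D 0 = LinearMap.id :=
  hom_ext fun d hd => by rw [shift_mono fun _ => hd, add_zero, LinearMap.id_apply]

end Shift

section Polynomial

variable {σ k : Type*} [CommRing k] {D E : Set (σ → ℤ)} [D.OrdConnected] [E.OrdConnected]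

lemma add_exponent_mem {d : σ → ℤ} (hd : d ∈ D) {m m' : σ →₀ ℕ}
    (h : d + exponent m + exponent m' ∈ D) : d + exponent m ∈ D :=
  Set.OrdConnected.out ‹_› hd h
    ⟨le_add_of_nonneg_right (exponent_nonneg m), le_add_of_nonneg_right (exponent_nonneg m')⟩

variable (k D) in
/-- The action of polynomials on a monomial module. -/
def action : MvPolynomial σ k →ₐ[k] Module.End k (MonomialModule k D) :=
  AddMonoidAlgebra.lift k (Module.End k (MonomialModule k D)) (σ →₀ ℕ)
    { toFun m := shift k D D (exponent m.toAdd)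
      map_one' := by rw [toAdd_one, map_zero, shift_zero]; rfl
      map_mul' m m' := by
        rw [toAdd_mul, add_comm, map_add]
        exact (shift_comp_shift fun d hd => add_exponent_mem hd).symm }

lemma action_monomial (m : σ →₀ ℕ) (c : k) :
    action k D (monomial m c) = c • shift k D D (exponent m) :=
  AddMonoidAlgebra.lift_single _ _ _

instance : Module (MvPolynomial σ k) (MonomialModule k D) :=
  Module.compHom _ (action k D).toRingHom

lemma smul_eq_action (p : MvPolynomial σ k) (x : MonomialModule k D) : p • x = action k D p x := rfl

instance : IsScalarTower k (MvPolynomial σ k) (MonomialModule k D) where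
  smul_assoc c p x := by
    rw [smul_eq_action, map_smul]
    rfl

lemma monomial_smul (m : σ →₀ ℕ) (x : MonomialModule k D) :
    (monomial m 1 : MvPolynomial σ k) • x = shift k D D (exponent m) x := by
  rw [smul_eq_action, action_monomial, one_smul]

lemma monomial_smul_mono (m : σ →₀ ℕ) {d : σ → ℤ} (hd : d ∈ D) :
    (monomial m 1 : MvPolynomial σ k) • mono (k := k) D d = mono D (d + exponent m) := by
  rw [monomial_smul, shift_mono fun _ => hd]

lemma shift_zero_comp_action (h : ∀ d ∈ D, ∀ e ∈ E, d ≤ e → e ∈ D ∧ d ∈ E) (p : MvPolynomial σ k) :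
    shift k D E 0 ∘ₗ action k D p = action k E p ∘ₗ shift k D E 0 := by
  have h_add : ∀ d ∈ D, ∀ m, d + exponent m ∈ E → d + exponent m ∈ D ∧ d ∈ E := fun d hd m hm =>
    h d hd _ hm (le_add_of_nonneg_right (exponent_nonneg m))
  induction p using MvPolynomial.induction_on' with
  | monomial m c =>
    rw [action_monomial, action_monomial, LinearMap.comp_smul, LinearMap.smul_comp,
      shift_comp_shift, shift_comp_shift, add_zero, zero_add]
    · exact fun d hd hm => by rw [add_zero] at hm ⊢; exact (h_add d hd m hm).2
    · exact fun d hd hm => by rw [add_zero] at hm; exact (h_add d hd m hm).1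
  | add p q hp hq => rw [map_add, map_add, LinearMap.comp_add, LinearMap.add_comp, hp, hq]

variable (k) in
/-- The degree-preserving map between monomial modules, when it is linear over polynomials. -/
def truncate (h : ∀ d ∈ D, ∀ e ∈ E, d ≤ e → e ∈ D ∧ d ∈ E) :
    MonomialModule k D →ₗ[MvPolynomial σ k] MonomialModule k E :=
  { shift k D E 0 with map_smul' p x := LinearMap.congr_fun (shift_zero_comp_action h p) x }

lemma bijective_monomial_smul {m : σ →₀ ℕ} (hD : ∀ d, d + exponent m ∈ D ↔ d ∈ D) :
    Function.Bijective ((monomial m 1 : MvPolynomial σ k) • · : MonomialModule k D → _) := by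
  have mem_sub : ∀ d ∈ D, d + -exponent m ∈ D := fun d hd => by simpa [← hD (d + -exponent m)]
  refine Function.bijective_iff_has_inverse.2 ⟨shift k D D (-exponent m), fun x => ?_, fun x => ?_⟩
    <;> simp only [monomial_smul]
  · rw [← LinearMap.comp_apply, shift_comp_shift fun d hd _ => (hD d).2 hd, add_neg_cancel,
      shift_zero, LinearMap.id_apply]
  · rw [← LinearMap.comp_apply, shift_comp_shift fun d hd _ => mem_sub d hd, neg_add_cancel,
      shift_zero, LinearMap.id_apply]

lemma exists_X_pow_smul_eq_zero {i : σ} (hi : ∀ d ∈ D, d i < 0) (x : MonomialModule k D) :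
    ∃ N : ℕ, (X i : MvPolynomial σ k) ^ N • x = 0 := by
  let torsion := Submodule.torsion' (MvPolynomial σ k) (MonomialModule k D)
    (Submonoid.powers (X i : MvPolynomial σ k))
  have basis_mem : ∀ d, basis k D d ∈ torsion.restrictScalars k := fun d => by
    refine ⟨⟨_, (-d.1 i).toNat, rfl⟩, ?_⟩
    have not_mem : d.1 + exponent (Finsupp.single i (-d.1 i).toNat) ∉ D := fun h => by
      have := hi _ h
      simp only [Pi.add_apply, exponent_apply, Finsupp.single_eq_same] at this
      lia
    change (X i ^ _ : MvPolynomial σ k) • basis k D d = 0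
    rw [← mono_of_mem d.2, X_pow_eq_monomial, monomial_smul_mono _ d.2, mono_of_notMem not_mem]
  have mem : x ∈ torsion.restrictScalars k :=
    Submodule.span_le.2 (Set.range_subset_iff.2 basis_mem) ((basis k D).mem_span x)
  obtain ⟨⟨_, N, rfl⟩, hN⟩ := mem
  exact ⟨N, hN⟩

/-- The polynomial ring is the monomial module on the nonnegative degrees. -/
def polynomialEquiv [Finite σ] (hD : D = Set.Ici 0) :
    MvPolynomial σ k ≃ₗ[MvPolynomial σ k] MonomialModule k D :=
  have mem : ∀ m : σ →₀ ℕ, exponent m ∈ D := fun m => hD ▸ exponent_nonneg m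
  have bij : Function.Bijective (fun m : σ →₀ ℕ => (⟨exponent m, mem m⟩ : D)) :=
    ⟨fun _ _ h => exponent_injective (congrArg Subtype.val h), fun d =>
      (exists_exponent_eq (hD ▸ d.2 : d.1 ∈ Set.Ici 0)).imp fun _ h => Subtype.ext h⟩
  let φ := LinearMap.toSpanSingleton (MvPolynomial σ k) (MonomialModule k D) (mono D 0)
  let ψ := (basisMonomials σ k).equiv (basis k D) (Equiv.ofBijective _ bij)
  have φ_eq : φ.restrictScalars k = ψ := (basisMonomials σ k).ext fun m => by
    have zero_mem : 0 ∈ D := by rw [hD]; exact Set.self_mem_Ici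
    change (monomial m 1 : MvPolynomial σ k) • mono (k := k) D 0 = ψ (basisMonomials σ k m)
    rw [monomial_smul_mono m zero_mem, zero_add, mono_of_mem (mem m), Basis.equiv_apply]
    rfl
  LinearEquiv.ofBijective φ (by
    change Function.Bijective (φ.restrictScalars k)
    rw [φ_eq]
    exact ψ.bijective)

end Polynomial

end

end MonomialModule

namespace MonomialModule

open CategoryTheory

noncomputable section

section Decomposition

variable {G k : Type*} [AddCommMonoid G] [CommRing k] {D D₁ D₂ E U : Set G}

lemma shift_zero_comp_shift_zero (h : D ⊆ E) :
    shift k E D 0 ∘ₗ shift k D E 0 = LinearMap.id := by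
  rw [shift_comp_shift fun d hd _ => by simpa using h hd, add_zero, shift_zero]

lemma shift_zero_comp_shift_zero_of_disjoint (h₁ : D₁ ⊆ E) (h : Disjoint D₁ D₂) :
    shift k E D₂ 0 ∘ₗ shift k D₁ E 0 = 0 :=
  hom_ext fun d hd => by
    have hd₂ := Set.disjoint_left.1 h hd
    rw [LinearMap.comp_apply, shift_mono fun _ => hd, shift_mono fun _ => by simpa using h₁ hd,
      add_zero, add_zero, mono_of_notMem hd₂, LinearMap.zero_apply]

lemma shift_zero_add_shift_zero (h₁ : D₁ = E ∩ U) (h₂ : D₂ = E \ U) :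
    shift k D₁ E 0 ∘ₗ shift k E D₁ 0 + shift k D₂ E 0 ∘ₗ shift k E D₂ 0 = LinearMap.id := by
  refine hom_ext fun d hd => ?_
  by_cases hU : d ∈ U
  · have hd₁ : d ∈ D₁ := by grind
    have hd₂ : d ∉ D₂ := by grind
    simp [shift_mono, hd, hd₁, mono_of_notMem hd₂]
  · have hd₁ : d ∉ D₁ := by grind
    have hd₂ : d ∈ D₂ := by grind
    simp [shift_mono, hd, hd₂, mono_of_notMem hd₁]

end Decomposition

section ShortExact

variable {σ : Type*} (k : Type*) [CommRing k] {D₁ D₂ E U : Set (σ → ℤ)} [D₁.OrdConnected]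
  [D₂.OrdConnected] [E.OrdConnected]

/-- An upper set `U` of degrees cuts a monomial module on `E` into the submodule on `E ∩ U` and the
quotient on `E \ U`. -/
def upperShortComplex (hU : IsUpperSet U) (h₁ : D₁ = E ∩ U) (h₂ : D₂ = E \ U) :
    ShortComplex (ModuleCat (MvPolynomial σ k)) :=
  ShortComplex.mk
    (ModuleCat.ofHom (truncate k (D := D₁) (E := E) fun d hd e he hde => by
      subst h₁; exact ⟨⟨he, hU hde hd.2⟩, hd.1⟩))
    (ModuleCat.ofHom (truncate k (D := E) (E := D₂) fun d hd e he hde => by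
      subst h₂; exact ⟨he.1, hd, fun hdU => he.2 (hU hde hdU)⟩))
    (ModuleCat.hom_ext (LinearMap.ext fun x => LinearMap.congr_fun
      (shift_zero_comp_shift_zero_of_disjoint (k := k) (h₁ ▸ Set.inter_subset_left)
        (h₁ ▸ h₂ ▸ Set.disjoint_sdiff_inter.symm)) x))

lemma shortExact_upperShortComplex (hU : IsUpperSet U) (h₁ : D₁ = E ∩ U) (h₂ : D₂ = E \ U) :
    (upperShortComplex k hU h₁ h₂).ShortExact where
  exact := by
    rw [ShortComplex.moduleCat_exact_iff]
    intro (x : MonomialModule k E) (hx : shift k E D₂ 0 x = 0)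
    have decomposition := LinearMap.congr_fun (shift_zero_add_shift_zero (k := k) h₁ h₂) x
    simp only [LinearMap.add_apply, LinearMap.comp_apply, hx, map_zero, add_zero] at decomposition
    exact ⟨shift k E D₁ 0 x, decomposition⟩
  mono_f := (ModuleCat.mono_iff_injective _).2 (Function.LeftInverse.injective (g := shift k E D₁ 0)
    (LinearMap.congr_fun (shift_zero_comp_shift_zero (k := k) (h₁ ▸ Set.inter_subset_left))))
  epi_g := (ModuleCat.epi_iff_surjective _).2 (Function.RightInverse.surjective
    (g := shift k D₂ E 0)
    (LinearMap.congr_fun (shift_zero_comp_shift_zero (k := k) (h₂ ▸ Set.sdiff_subset))))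

end ShortExact

end

end MonomialModule

section SignRegion

variable {σ : Type*}

/-- The degrees whose coordinates in `S` are negative exactly at the indices in `T`. -/
def signRegion (S T : Set σ) : Set (σ → ℤ) :=
  {d | ∀ i ∈ S, d i < 0 ↔ i ∈ T}

instance (S T : Set σ) : (signRegion S T).OrdConnected where
  out' _ hd _ he _ hc i hi :=
    ⟨fun h => (hd i hi).1 ((hc.1 i).trans_lt h), fun h => (hc.2 i).trans_lt ((he i hi).2 h)⟩

instance (S T : Set σ) : IsCodirectedOrder (signRegion S T) where
  directed d e := ⟨⟨d.1 ⊓ e.1, fun i hi => by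
    rw [Pi.inf_apply, inf_lt_iff, d.2 i hi, e.2 i hi, or_self]⟩,
    inf_le_left (a := d.1), inf_le_right (b := e.1)⟩

lemma signRegion_univ_empty : signRegion (Set.univ : Set σ) ∅ = Set.Ici 0 := by
  ext d
  simp [signRegion, Pi.le_def]

lemma isUpperSet_nonneg (j : σ) : IsUpperSet {d : σ → ℤ | 0 ≤ d j} := fun _ _ h hd =>
  le_trans hd (h j)

lemma signRegion_univ_eq_inter {j : σ} {T : Set σ} (hj : j ∉ T) :
    signRegion Set.univ T = signRegion {j}ᶜ T ∩ {d | 0 ≤ d j} := by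
  ext d
  simp only [signRegion, Set.mem_univ, Set.mem_inter_iff, Set.mem_ofPred_eq,
    Set.mem_compl_iff, Set.mem_singleton_iff]
  grind

lemma signRegion_univ_insert_eq_diff (j : σ) (T : Set σ) :
    signRegion Set.univ (insert j T) = signRegion {j}ᶜ T \ {d | 0 ≤ d j} := by
  ext d
  simp only [signRegion, Set.mem_univ, Set.mem_sdiff, Set.mem_ofPred_eq,
    Set.mem_compl_iff, Set.mem_singleton_iff, Set.mem_insert_iff]
  grind

lemma add_exponent_single_mem_signRegion (j : σ) (T : Set σ) (d : σ → ℤ) :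
    d + exponent (Finsupp.single j 1) ∈ signRegion {j}ᶜ T ↔ d ∈ signRegion {j}ᶜ T := by
  refine forall₂_congr fun i hi => ?_
  simp [Finsupp.single_eq_of_ne hi]

end SignRegion

lemma exists_pow_span_smul_eq_zero {R M : Type*} [CommRing R] [AddCommGroup M] [Module R M]
    {s : Set R} (hs : s.Finite) {x : M} (hx : ∀ r ∈ s, ∃ N : ℕ, r ^ N • x = 0) :
    ∃ t : ℕ, ∀ r ∈ Ideal.span s ^ t, r • x = 0 :=
  Ideal.exists_pow_le_of_le_radical_of_fg (J := LinearMap.ker (LinearMap.toSpanSingleton R M x))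
    (Ideal.span_le.2 hx) (Submodule.fg_span hs)

section LocalCohomologyOfPolynomialRing

open CategoryTheory MonomialModule

universe u v

variable {σ : Type u} [Finite σ] {k : Type v} [CommRing k]

lemma nonempty_localCohomology_iso_signRegion (I : Ideal (MvPolynomial σ k)) (T : Finset σ)
    (hT : ∀ i ∈ T, X i ∈ I) (r : ℕ) :
    Nonempty ((localCohomology I (r + T.card)).obj (ModuleCat.of _ (MvPolynomial σ k)) ≅
      (localCohomology I r).obj
        (ModuleCat.of _ (MonomialModule k (signRegion Set.univ (T : Set σ))))) := by
  classical
  induction T using Finset.induction_on generalizing r with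
  | empty =>
    exact ⟨(localCohomology I r).mapIso
      (polynomialEquiv (by rw [Finset.coe_empty, signRegion_univ_empty])).toModuleIso⟩
  | insert j T hj ih =>
    obtain ⟨e⟩ := ih (fun i hi => hT i (Finset.mem_insert_of_mem hi)) (r + 1)
    have shift := localCohomologyShiftIso (shortExact_upperShortComplex k (isUpperSet_nonneg j)
        (signRegion_univ_eq_inter (T := T) hj) (signRegion_univ_insert_eq_diff j T))
      (hT j (Finset.mem_insert_self j T))
      (bijective_monomial_smul (add_exponent_single_mem_signRegion j T)) r
    rw [Finset.card_insert_of_notMem hj, Finset.coe_insert, add_comm T.card, ← add_assoc]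
    exact ⟨e ≪≫ shift.symm⟩

theorem nonempty_localCohomology_equiv_monomialModule {I : Ideal (MvPolynomial σ k)} (T : Finset σ)
    (hI : I = Ideal.span (X '' (T : Set σ))) :
    Nonempty ((localCohomology I T.card).obj (ModuleCat.of _ (MvPolynomial σ k))
      ≃ₗ[MvPolynomial σ k] MonomialModule k (signRegion Set.univ (T : Set σ))) := by
  obtain ⟨e⟩ := nonempty_localCohomology_iso_signRegion I T
    (fun i hi => hI ▸ Ideal.subset_span ⟨i, hi, rfl⟩) 0
  rw [zero_add] at e
  have torsion (x : MonomialModule k (signRegion Set.univ (T : Set σ))) :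
      ∃ t : ℕ, ∀ p ∈ I ^ t, p • x = 0 :=
    hI ▸ exists_pow_span_smul_eq_zero (T.finite_toSet.image X) (Set.forall_mem_image.2 fun i hi =>
      exists_X_pow_smul_eq_zero (fun d hd => (hd i trivial).2 hi) x)
  exact ⟨(e ≪≫ localCohomologyZeroIso torsion).toLinearEquiv⟩

end LocalCohomologyOfPolynomialRing

section DegreePart

open Module

variable {G k M : Type*} [Ring k] [AddCommGroup M] [Module k M] {D : Set G}

/-- The component of degree `d` of the grading in which the basis vector `b d` has degree `d`. -/
noncomputable def degreePart (b : Basis D k M) (d : G) : Submodule k M :=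
  Submodule.span k {zeroExtend b d}

variable (b : Basis D k M)

lemma degreePart_of_mem {d : G} (hd : d ∈ D) : degreePart b d = k ∙ b ⟨d, hd⟩ := by
  rw [degreePart, zeroExtend_of_mem b hd]

lemma degreePart_of_notMem {d : G} (hd : d ∉ D) : degreePart b d = ⊥ := by
  rw [degreePart, zeroExtend_of_notMem _ hd, Submodule.span_zero_singleton]

lemma mem_degreePart_coe {d : D} {m : M} : m ∈ degreePart b d ↔ ∃ c : k, c • b d = m := by
  rw [degreePart_of_mem b d.2, Submodule.mem_span_singleton]

lemma basis_mem_degreePart (d : D) : b d ∈ degreePart b d :=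
  (mem_degreePart_coe b).2 ⟨1, one_smul k _⟩

lemma nonempty_degreePart_equiv {d : G} (hd : d ∈ D) : Nonempty (degreePart b d ≃ₗ[k] k) := by
  have injective : Function.Injective (LinearMap.toSpanSingleton k M (b ⟨d, hd⟩)) := fun _ _ h => by
    simpa using DFunLike.congr_fun (congrArg b.repr h) ⟨d, hd⟩
  rw [degreePart_of_mem b hd, ← LinearMap.range_toSpanSingleton]
  exact ⟨(LinearEquiv.ofInjective _ injective).symm⟩

lemma isInternal_degreePart [DecidableEq G] : DirectSum.IsInternal (degreePart b) := by
  rw [DirectSum.isInternal_submodule_iff_iSupIndep_and_iSup_eq_top]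
  refine ⟨?_, eq_top_iff.2 ?_⟩
  · have independent : iSupIndep fun d : D => degreePart b d := by
      simpa only [degreePart_of_mem b (Subtype.prop _)] using
        b.linearIndependent.iSupIndep_span_singleton
    have mem (d : {d // degreePart b d ≠ ⊥}) : d.1 ∈ D :=
      not_imp_comm.1 (degreePart_of_notMem b) d.2
    have injective : Function.Injective fun d : {d // degreePart b d ≠ ⊥} => (⟨d.1, mem d⟩ : D) :=
      fun _ _ h => Subtype.ext (Subtype.mk.inj h)
    exact iSupIndep_ne_bot.1 (independent.comp injective :)
  · rw [← b.span_eq, Submodule.span_le, Set.range_subset_iff]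
    exact fun d => le_iSup (degreePart b) d.1 (basis_mem_degreePart b d)

end DegreePart

section MonomialBasis

open Module

variable {σ k M : Type*} [CommRing k] [AddCommGroup M] [Module (MvPolynomial σ k) M] [Module k M]
  {D : Set (σ → ℤ)}

/-- A basis with one vector in each degree of `D` on which monomials act as they do on
`MonomialModule k D`. -/
def IsMonomialBasis (b : Basis D k M) : Prop :=
  ∀ (d : D) (m : σ →₀ ℕ),
    (monomial m 1 : MvPolynomial σ k) • b d = zeroExtend b (d + exponent m)

lemma exists_isMonomialBasis [IsScalarTower k (MvPolynomial σ k) M] [D.OrdConnected]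
    (e : M ≃ₗ[MvPolynomial σ k] MonomialModule k D) : ∃ b : Basis D k M, IsMonomialBasis b := by
  refine ⟨(MonomialModule.basis k D).map (e.restrictScalars k).symm, fun d m => ?_⟩
  have smul_basis := MonomialModule.monomial_smul_mono (k := k) m d.2
  rw [MonomialModule.mono_of_mem d.2] at smul_basis
  rw [Basis.map_apply]
  change _ • e.symm (MonomialModule.basis k D d) = _
  rw [← map_smul, smul_basis, MonomialModule.mono, map_zeroExtend]
  rfl

variable {b : Basis D k M}

/-- The endomorphism `f` is homogeneous of degree zero for the family of components `g`. -/
def PreservesDegree {G : Type*} (g : G → Submodule k M) (f : M →ₗ[MvPolynomial σ k] M) : Prop :=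
  ∀ d, ∀ m ∈ g d, f m ∈ g d

lemma PreservesDegree.exists_apply_eq_smul {f : M →ₗ[MvPolynomial σ k] M}
    (hf : PreservesDegree (degreePart b) f) (d : D) : ∃ c : k, f (b d) = c • b d :=
  ((mem_degreePart_coe b).1 (hf d _ (basis_mem_degreePart b d))).imp fun _ h => h.symm

variable [IsScalarTower k (MvPolynomial σ k) M]

namespace IsMonomialBasis

lemma X_smul_mem_degreePart [DecidableEq σ] (hb : IsMonomialBasis b) (i : σ) {d : σ → ℤ} {m : M}
    (hm : m ∈ degreePart b d) :
    (X i : MvPolynomial σ k) • m ∈ degreePart b (d + Pi.single i 1) := by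
  by_cases hd : d ∈ D
  · lift d to D using hd
    obtain ⟨c, rfl⟩ := (mem_degreePart_coe b).1 hm
    have exponent_single : exponent (Finsupp.single i 1) = Pi.single i 1 := by
      ext j; simp [Finsupp.single_apply, Pi.single_apply, eq_comm]
    rw [smul_comm, X, hb, exponent_single]
    exact Submodule.smul_mem _ c (Submodule.mem_span_singleton_self _)
  · rw [degreePart_of_notMem b hd, Submodule.mem_bot] at hm
    rw [hm, smul_zero]
    exact zero_mem _

lemma apply_eq_smul_of_le [Finite σ] (hb : IsMonomialBasis b) {d e : D} (hde : d ≤ e)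
    {f : M →ₗ[MvPolynomial σ k] M} {c : k} (h : f (b d) = c • b d) : f (b e) = c • b e := by
  obtain ⟨m, hm⟩ := exists_exponent_eq (sub_nonneg.2 hde : (0 : σ → ℤ) ≤ e - d)
  have b_eq : b e = (monomial m 1 : MvPolynomial σ k) • b d := by
    rw [hb, hm, add_sub_cancel, zeroExtend_of_mem b e.2]
  rw [b_eq, map_smul, h, smul_comm]

variable [Finite σ] [IsCodirectedOrder D] {f f₁ f₂ : M →ₗ[MvPolynomial σ k] M}

-- Any two degrees of `D` lie above a common one, from which monomials carry the scalar to both.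
lemma apply_eq_smul (hb : IsMonomialBasis b) (hf : PreservesDegree (degreePart b) f) {a : D} {c : k}
    (h : f (b a) = c • b a) (m : M) : f m = c • m := by
  have apply_basis (d : D) : f (b d) = c • b d := by
    obtain ⟨e, hea, hed⟩ := exists_le_le a d
    obtain ⟨c', hc'⟩ := hf.exists_apply_eq_smul e
    have c_eq : c • b a = c' • b a := h.symm.trans (hb.apply_eq_smul_of_le hea hc')
    obtain rfl : c = c' := by simpa using DFunLike.congr_fun (congrArg b.repr c_eq) a
    exact hb.apply_eq_smul_of_le hed hc'
  exact LinearMap.congr_fun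
    (b.ext apply_basis : f.restrictScalars k = c • LinearMap.id) m

lemma exists_forall_apply_eq_smul (hb : IsMonomialBasis b) (a : D)
    (hf : PreservesDegree (degreePart b) f) : ∃ c : k, ∀ m, f m = c • m :=
  (hf.exists_apply_eq_smul a).imp fun _ h => hb.apply_eq_smul hf h

lemma eq_of_eqOn_degreePart (hb : IsMonomialBasis b) (a : D)
    (hf₁ : PreservesDegree (degreePart b) f₁) (hf₂ : PreservesDegree (degreePart b) f₂)
    (h : ∀ m ∈ degreePart b a, f₁ m = f₂ m) : f₁ = f₂ := by
  obtain ⟨c, hc⟩ := hf₂.exists_apply_eq_smul a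
  have hc₁ : f₁ (b a) = c • b a := (h _ (basis_mem_degreePart b a)).trans hc
  exact LinearMap.ext fun m =>
    (hb.apply_eq_smul hf₁ hc₁ m).trans (hb.apply_eq_smul hf₂ hc m).symm

end IsMonomialBasis

lemma exists_preservesDegree_extending (b : Basis D k M) (a : D)
    (φ : degreePart b a →ₗ[k] degreePart b a) :
    ∃ f : M →ₗ[MvPolynomial σ k] M, PreservesDegree (degreePart b) f ∧
      ∀ m (hm : m ∈ degreePart b a), f m = φ ⟨m, hm⟩ := by
  obtain ⟨c, hc⟩ := (mem_degreePart_coe b).1 (φ ⟨b a, basis_mem_degreePart b a⟩).2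
  refine ⟨c • LinearMap.id, fun d m hm => (degreePart b d).smul_mem c hm, fun m hm => ?_⟩
  obtain ⟨r, rfl⟩ := (mem_degreePart_coe b).1 hm
  calc c • r • b a = r • c • b a := smul_comm c r (b a)
    _ = r • (φ ⟨b a, basis_mem_degreePart b a⟩ : M) := by rw [hc]
    _ = φ ⟨r • b a, hm⟩ := congrArg Subtype.val (φ.map_smul r _).symm

end MonomialBasis

universe u v in
theorem stmt_4_general {σ : Type u} [Fintype σ] [DecidableEq σ] {k : Type v} [CommRing k]
    (T : Finset σ) {I : Ideal (MvPolynomial σ k)} (hI : I = Ideal.span (X '' (T : Set σ)))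
    {r : ℕ} (hr : r = T.card)
    [Module k ((localCohomology I r).obj (ModuleCat.of _ (MvPolynomial σ k)))]
    [IsScalarTower k (MvPolynomial σ k)
      ((localCohomology I r).obj (ModuleCat.of _ (MvPolynomial σ k)))]
    {a : σ → ℤ} (ha : a ∈ signRegion Set.univ (T : Set σ)) :
    let H := (localCohomology I r).obj (ModuleCat.of _ (MvPolynomial σ k))
    ∃ g : (σ → ℤ) → Submodule k H,
      DirectSum.IsInternal g ∧
      (∀ i d, ∀ m ∈ g d, (X i : MvPolynomial σ k) • m ∈ g (d + Pi.single i 1)) ∧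
      (∀ d ∈ signRegion Set.univ (T : Set σ), Nonempty (g d ≃ₗ[k] k)) ∧
      (∀ d ∉ signRegion Set.univ (T : Set σ), g d = ⊥) ∧
      (∀ f : H →ₗ[MvPolynomial σ k] H, PreservesDegree g f → ∃ c : k, ∀ m, f m = c • m) ∧
      (∀ f₁ f₂ : H →ₗ[MvPolynomial σ k] H, PreservesDegree g f₁ → PreservesDegree g f₂ →
        (∀ m ∈ g a, f₁ m = f₂ m) → f₁ = f₂) ∧
      ∀ φ : g a →ₗ[k] g a, ∃ f : H →ₗ[MvPolynomial σ k] H, PreservesDegree g f ∧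
        ∀ m (hm : m ∈ g a), f m = φ ⟨m, hm⟩ := by
  intro
  subst hr
  obtain ⟨e⟩ := nonempty_localCohomology_equiv_monomialModule T hI
  obtain ⟨b, hb⟩ := exists_isMonomialBasis e
  lift a to signRegion Set.univ (T : Set σ) using ha
  exact ⟨degreePart b, isInternal_degreePart b, fun i _ _ => hb.X_smul_mem_degreePart i,
    fun _ => nonempty_degreePart_equiv b, fun _ => degreePart_of_notMem b,
    fun _ => hb.exists_forall_apply_eq_smul a, fun _ _ => hb.eq_of_eqOn_degreePart a,
    exists_preservesDegree_extending b a⟩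

/-- Every `ℤⁿ`-graded `R`-module endomorphism of `H^l_{p_a}(R)` (`a ∈ Ω`, `l = |a|`) is
multiplication by a scalar of `k`; more precisely, restriction of graded endomorphisms to
the (1-dimensional) degree-`a` component is a bijection onto its `k`-linear endomorphisms.
The canonical grading is encoded as an internal compatible decomposition whose
homogeneous components have the canonical dimensions. -/
theorem stmt_4 (n : ℕ) (k : Type) [Field k] (a : Fin n → ℤ) (ha : isOm a)
    [Module k (LC k (faceIdeal k a) (wt a))]
    [IsScalarTower k (MvPolynomial (Fin n) k) (LC k (faceIdeal k a) (wt a))] :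
    ∃ g : (Fin n → ℤ) → Submodule k (LC k (faceIdeal k a) (wt a)),
      DirectSum.IsInternal g ∧ GradingCompat k _ g ∧
      (∀ d : Fin n → ℤ, Module.finrank k (g d) =
        if (∀ i, (a i = -1 → d i < 0) ∧ (a i = 0 → 0 ≤ d i)) then 1 else 0) ∧
      -- every graded endomorphism is multiplication by a scalar of `k`
      (∀ f : LC k (faceIdeal k a) (wt a) →ₗ[MvPolynomial (Fin n) k] LC k (faceIdeal k a) (wt a),
        (∀ d : Fin n → ℤ, ∀ m ∈ g d, f m ∈ g d) → ∃ c : k, ∀ m, f m = c • m) ∧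
      -- restriction to the degree-`a` component is injective on graded endomorphisms …
      (∀ f₁ f₂ : LC k (faceIdeal k a) (wt a) →ₗ[MvPolynomial (Fin n) k] LC k (faceIdeal k a) (wt a),
        (∀ d : Fin n → ℤ, ∀ m ∈ g d, f₁ m ∈ g d) →
        (∀ d : Fin n → ℤ, ∀ m ∈ g d, f₂ m ∈ g d) →
        (∀ m ∈ g a, f₁ m = f₂ m) → f₁ = f₂) ∧
      -- … and surjective onto `k`-linear endomorphisms of the degree-`a` component
      (∀ φ : ↥(g a) →ₗ[k] ↥(g a),
        ∃ f : LC k (faceIdeal k a) (wt a) →ₗ[MvPolynomial (Fin n) k] LC k (faceIdeal k a) (wt a),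
          (∀ d : Fin n → ℤ, ∀ m ∈ g d, f m ∈ g d) ∧
          ∀ m (hm : m ∈ g a), f m = (φ ⟨m, hm⟩ : LC k (faceIdeal k a) (wt a))) := by
  let T : Finset (Fin n) := Finset.univ.filter fun i => a i = -1
  have mem_region (d : Fin n → ℤ) : d ∈ signRegion Set.univ (T : Set (Fin n)) ↔
      ∀ i, (a i = -1 → d i < 0) ∧ (a i = 0 → 0 ≤ d i) := by
    refine forall_congr' fun i => ?_
    rcases ha i with h | h <;> simp [T, h]
  have a_mem : a ∈ signRegion Set.univ (T : Set (Fin n)) :=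
    (mem_region a).2 fun i => ⟨fun h => by lia, fun h => h.ge⟩
  obtain ⟨g, internal, compat, equiv, eq_bot, endomorphisms⟩ :=
    stmt_4_general T (I := faceIdeal k a) (r := wt a) (by simp [faceIdeal, T]) rfl a_mem
  refine ⟨g, internal, compat, fun d => ?_, endomorphisms⟩
  by_cases hd : d ∈ signRegion Set.univ (T : Set (Fin n))
  · rw [if_pos ((mem_region d).1 hd), (equiv d hd).some.finrank_eq, Module.finrank_self]
  · rw [if_neg (mt (mem_region d).2 hd), eq_bot d hd, finrank_bot]
end
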